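/- Suppose s(v) ≥ OPT(k,l) for every vertex v of G, and suppose X ≠ ∅ and Y ≠ ∅. Then S₂ ≥ λ₁ · ((1−α)/α) · β^{m−1}. -/

import Mathlib

open scoped BigOperators

/-- The arc relation of the oriented star `S_{k,l}` on `Fin (k+l+1)`:
vertex `0` is the center, vertices `1,…,k` are the out-leaves and
vertices `k+1,…,k+l` are the in-leaves. -/
def StarArc (k l : ℕ) (a b : Fin (k + l + 1)) : Prop :=
  (a.val = 0 ∧ 1 ≤ b.val ∧ b.val ≤ k) ∨ (b.val = 0 ∧ k + 1 ≤ a.val)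

/-- `φ` witnesses an induced copy of `S_{k,l}` in the digraph with arc relation `A`:
it is injective and maps arcs to arcs and non-arcs to non-arcs. -/
def IsStarEmb (k l : ℕ) {V : Type*} (A : V → V → Prop) (φ : Fin (k + l + 1) → V) : Prop :=
  Function.Injective φ ∧ ∀ a b, StarArc k l a b ↔ A (φ a) (φ b)

/-- `s(G)`: the probability that a uniformly random map `V(S_{k,l}) → V(G)`
induces a copy of `S_{k,l}`. -/
noncomputable def starProb (k l : ℕ) (V : Type*) [Fintype V] (A : V → V → Prop) : ℝ :=
  (Nat.card {φ : Fin (k + l + 1) → V // IsStarEmb k l A φ} : ℝ) /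
    (Fintype.card V : ℝ) ^ (k + l + 1)

/-- The probability that a uniformly random map induces a copy of `S_{k,l}`
and moreover has property `P`. -/
noncomputable def starProbOn (k l : ℕ) {V : Type*} [Fintype V] (A : V → V → Prop)
    (P : (Fin (k + l + 1) → V) → Prop) : ℝ :=
  (Nat.card {φ : Fin (k + l + 1) → V // IsStarEmb k l A φ ∧ P φ} : ℝ) /
    (Fintype.card V : ℝ) ^ (k + l + 1)

/-- `s(z→v) = Pr[φ ∈ 𝒮 | φ z = v]`. -/
noncomputable def sCond (k l : ℕ) {V : Type*} [Fintype V] (A : V → V → Prop)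
    (z : Fin (k + l + 1)) (v : V) : ℝ :=
  (Nat.card {φ : Fin (k + l + 1) → V // IsStarEmb k l A φ ∧ φ z = v} : ℝ) /
    (Fintype.card V : ℝ) ^ (k + l)

/-- `Pr[φ ∈ 𝒮 ∧ P φ | φ(c) = v]`, where `c = 0` is the center of the star. -/
noncomputable def sCondOn (k l : ℕ) {V : Type*} [Fintype V] (A : V → V → Prop) (v : V)
    (P : (Fin (k + l + 1) → V) → Prop) : ℝ :=
  (Nat.card {φ : Fin (k + l + 1) → V // IsStarEmb k l A φ ∧ φ 0 = v ∧ P φ} : ℝ) /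
    (Fintype.card V : ℝ) ^ (k + l)

open scoped Fin.NatCast in
/-- `s(v) = (s(c→v) + l·s(i→v) + k·s(o→v))/(m+1)`, where the center is `0`,
`k+1` is an in-leaf and `1` is an out-leaf. -/
noncomputable def sVert (k l : ℕ) {V : Type*} [Fintype V] (A : V → V → Prop) (v : V) : ℝ :=
  (sCond k l A 0 v + l * sCond k l A ((k + 1 : ℕ) : Fin (k + l + 1)) v
      + k * sCond k l A 1 v) / ((k : ℝ) + l + 1)

/-- `ρ(v)`: the proportion of vertices adjacent to `v`. -/
noncomputable def rho {V : Type*} [Fintype V] (A : V → V → Prop) (v : V) : ℝ :=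
  (Nat.card {u : V // A v u ∨ A u v} : ℝ) / (Fintype.card V : ℝ)

/-- `ρ⁺_B(v)`: the proportion of vertices that are out-neighbours of `v` lying in `B`. -/
noncomputable def rhoPIn {V : Type*} [Fintype V] (A : V → V → Prop) (B : Set V) (v : V) : ℝ :=
  (Nat.card {u : V // A v u ∧ u ∈ B} : ℝ) / (Fintype.card V : ℝ)

/-- `ρ⁻_B(v)`: the proportion of vertices that are in-neighbours of `v` lying in `B`. -/
noncomputable def rhoMIn {V : Type*} [Fintype V] (A : V → V → Prop) (B : Set V) (v : V) : ℝ :=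
  (Nat.card {u : V // A u v ∧ u ∈ B} : ℝ) / (Fintype.card V : ℝ)

/-- `ρ_B(v)`: the proportion of vertices adjacent to `v` lying in `B`. -/
noncomputable def rhoIn {V : Type*} [Fintype V] (A : V → V → Prop) (B : Set V) (v : V) : ℝ :=
  (Nat.card {u : V // (A v u ∨ A u v) ∧ u ∈ B} : ℝ) / (Fintype.card V : ℝ)

/-- `μ(B) = |B|/n`. -/
noncomputable def muSet {V : Type*} [Fintype V] (B : Set V) : ℝ :=
  (Nat.card B : ℝ) / (Fintype.card V : ℝ)

/-- `X`: the set of vertices of large degree, `ρ(v) ≥ 1/2`. -/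
def bigX {V : Type*} [Fintype V] (A : V → V → Prop) : Set V := {v | 1 / 2 ≤ rho A v}

/-- `Y = V(G) \ X`. -/
def bigY {V : Type*} [Fintype V] (A : V → V → Prop) : Set V := (bigX A)ᶜ

/-- `α = μ(X)`. -/
noncomputable def alphaX {V : Type*} [Fintype V] (A : V → V → Prop) : ℝ := muSet (bigX A)

/-- `D = min_{x ∈ X} ρ(x)`. -/
noncomputable def Dmin {V : Type*} [Fintype V] (A : V → V → Prop) : ℝ :=
  sInf (rho A '' bigX A)

/-- `β = max_{y ∈ Y} ρ_Y(y)`. -/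
noncomputable def betaY {V : Type*} [Fintype V] (A : V → V → Prop) : ℝ :=
  sSup ((fun y => rhoIn A (bigY A) y) '' bigY A)

/-- `γ = min_{x ∈ X} ρ⁻_Y(x)`. -/
noncomputable def gammaX {V : Type*} [Fintype V] (A : V → V → Prop) : ℝ :=
  sInf ((fun x => rhoMIn A (bigY A) x) '' bigX A)

/-- `S = (m+1)·min_{v ∈ V(G)} s(v)`. -/
noncomputable def Smin (k l : ℕ) {V : Type*} [Fintype V] (A : V → V → Prop) : ℝ :=
  ((k : ℝ) + l + 1) * sInf (Set.range (sVert k l A))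

/-- `S₁ = min_{x ∈ X} (ρ⁺_Y(x))^k (ρ⁻_Y(x))^l`. -/
noncomputable def S1min (k l : ℕ) {V : Type*} [Fintype V] (A : V → V → Prop) : ℝ :=
  sInf ((fun x => rhoPIn A (bigY A) x ^ k * rhoMIn A (bigY A) x ^ l) '' bigX A)

/-- `S₂ = S₁ − ((m−1)/((m+1)·C(m,k)))·(α+β)(1−α)(1−D)^{m−2}`. -/
noncomputable def S2min (k l : ℕ) {V : Type*} [Fintype V] (A : V → V → Prop) : ℝ :=
  S1min k l A - (((k : ℝ) + l - 1) / (((k : ℝ) + l + 1) * (Nat.choose (k + l) k : ℝ)))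
    * (alphaX A + betaY A) * (1 - alphaX A) * (1 - Dmin A) ^ (k + l - 2)

/-- `λ₀ = k^k l^l / m^m`. -/
noncomputable def lam0 (k l : ℕ) : ℝ := (k : ℝ) ^ k * (l : ℝ) ^ l / ((k : ℝ) + l) ^ (k + l)

/-- `λ₁ = k^k l (l−1)^{l−1} / (m−1)^{m−1}` (with the convention `0⁰ = 1`). -/
noncomputable def lam1 (k l : ℕ) : ℝ :=
  (k : ℝ) ^ k * (l : ℝ) * ((l : ℝ) - 1) ^ (l - 1) / ((k : ℝ) + l - 1) ^ (k + l - 1)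

/-- The edge density `ρ(Z)` of a set of vertices `Z`: the number of unordered adjacent
pairs in `Z` divided by `C(|Z|,2)`. -/
noncomputable def densSet {V : Type*} [Fintype V] (A : V → V → Prop) (Z : Set V) : ℝ :=
  ((Nat.card {p : V × V // p.1 ∈ Z ∧ p.2 ∈ Z ∧ (A p.1 p.2 ∨ A p.2 p.1)} : ℝ) / 2) /
    (Nat.choose (Nat.card Z) 2 : ℝ)

/-- `d = 1 − (E_{x ∈ X} ρ⁻_Y(x))/(1−α)`. -/
noncomputable def dXY {V : Type*} [Fintype V] (A : V → V → Prop) : ℝ :=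
  1 - ((∑ᶠ x ∈ bigX A, rhoMIn A (bigY A) x) / (Nat.card (bigX A) : ℝ)) / (1 - alphaX A)

/-- `OPT(k,l)`. -/
noncomputable def OPT (k l : ℕ) : ℝ :=
  if k = l then
    (1 / 2 ^ (2 * k)) *
      sSup {y : ℝ | ∃ a ∈ Set.Icc (0 : ℝ) 1, y = a * (1 - a) ^ (2 * k) + (1 - a) * a ^ (2 * k)}
  else
    sSup {y : ℝ | ∃ a ∈ Set.Icc (0 : ℝ) (1 / 2),
      ∃ d ∈ Set.Icc (0 : ℝ) ((k : ℝ) / ((k : ℝ) + (l : ℝ))),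
      y = a * (1 - a) ^ (k + l) * d ^ k * (1 - d) ^ l
        + (((k : ℝ) - 1) ^ (k - 1) * (l : ℝ) ^ l / ((k : ℝ) + (l : ℝ) - 1) ^ (k + l - 1))
          * (1 - a) * a ^ (k + l) * (1 - d)}

/-!
In a copy of the star the leaves are pairwise non-adjacent, so once a leaf is placed at `v` all
other leaves avoid the neighbourhood of `v`. Summing over the position of the centre and applying
AM-GM to the out- and in-degrees bounds `(m+1)·s(v)` by `λ₀` times
`ρ(v)ᵐ + M (ρ_X(v) (1 - ρ(v))^{m-1} + ρ_Y(v) 2^{-(m-1)})`, where `M = mᵐ/(m-1)^{m-1}`. On the other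
hand `(m+1)·OPT(k,l) ≥ λ₀ (m/(m+1))ᵐ`. By convexity these two bounds are compatible only if
`ρ ≥ 1 - δ` on `X` and `β ≤ δ`, where `δ = 6/(5m)`, and they then bound `α` from below. A star
centred in `X` rarely has a leaf in `X`, so `S₁` is nearly `λ₀ (m/(m+1))ᵐ`, while the right-hand
side and the correction in `S₂` are of the much smaller orders `δ^{m-1}` and `δ^{m-2}`. The
numerical inequalities have ample room for `m ≥ 7` and are checked exactly for `m = 6`.
-/

section Density

variable {V : Type*} [Fintype V] {A : V → V → Prop} {B C : Set V}

theorem muSet_eq_ncard_div (B : Set V) : muSet B = B.ncard / Fintype.card V := rfl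

theorem muSet_nonneg (B : Set V) : 0 ≤ muSet B := by
  rw [muSet_eq_ncard_div]; positivity

theorem muSet_mono (h : B ⊆ C) : muSet B ≤ muSet C := by
  rw [muSet_eq_ncard_div, muSet_eq_ncard_div]
  gcongr
  exact Set.toFinite C

theorem muSet_union (h : Disjoint B C) : muSet (B ∪ C) = muSet B + muSet C := by
  simp only [muSet_eq_ncard_div]
  rw [Set.ncard_union_eq h, Nat.cast_add, add_div]

theorem muSet_singleton (v : V) : muSet {v} = 1 / Fintype.card V := by
  simp [muSet_eq_ncard_div]

theorem muSet_pos (h : B.Nonempty) : 0 < muSet B := by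
  have : Nonempty V := h.to_type
  have : 0 < B.ncard := h.ncard_pos
  rw [muSet_eq_ncard_div]
  positivity

theorem muSet_le_one (B : Set V) : muSet B ≤ 1 := by
  rw [muSet_eq_ncard_div, ← Nat.card_eq_fintype_card, ← Set.ncard_univ]
  exact div_le_one_of_le₀ (mod_cast Set.ncard_le_ncard B.subset_univ) (Nat.cast_nonneg _)

theorem muSet_add_muSet_compl_le_one (B : Set V) : muSet B + muSet Bᶜ ≤ 1 := by
  rw [← muSet_union disjoint_compl_right]
  exact muSet_le_one _

theorem sum_indicator_const_div (B : Set V) (a : ℝ) :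
    ∑ v, B.indicator (fun _ => a / Fintype.card V) v = muSet B * a := by
  classical
  rw [Finset.sum_indicator_eq_sum_filter, Finset.sum_const, nsmul_eq_mul, muSet_eq_ncard_div,
    Set.ncard_eq_toFinset_card', Set.toFinset]
  rw [div_mul_eq_mul_div, mul_div_assoc]
  simp [Fintype.card_subtype]

/-- The neighbourhood `N⁺(v) ∪ N⁻(v)` of `v`; the vertices a second leaf may occupy once one leaf
sits at `v` form its complement. -/
def nbrSet (A : V → V → Prop) (v : V) : Set V := {u | A v u ∨ A u v}

theorem rho_eq_muSet_nbrSet (v : V) : rho A v = muSet (nbrSet A v) := rfl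

theorem rhoIn_eq_muSet_inter (B : Set V) (v : V) : rhoIn A B v = muSet (nbrSet A v ∩ B) := rfl

theorem rho_le_one (v : V) : rho A v ≤ 1 := muSet_le_one _

theorem rhoIn_nonneg (B : Set V) (v : V) : 0 ≤ rhoIn A B v := muSet_nonneg _

theorem rhoPIn_nonneg (B : Set V) (v : V) : 0 ≤ rhoPIn A B v := muSet_nonneg _

theorem rhoMIn_nonneg (B : Set V) (v : V) : 0 ≤ rhoMIn A B v := muSet_nonneg _

theorem rhoIn_le_rho (B : Set V) (v : V) : rhoIn A B v ≤ rho A v :=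
  muSet_mono Set.inter_subset_left

theorem rhoIn_le_muSet (B : Set V) (v : V) : rhoIn A B v ≤ muSet B :=
  muSet_mono Set.inter_subset_right

theorem rhoIn_univ (v : V) : rhoIn A Set.univ v = rho A v := by
  rw [rhoIn_eq_muSet_inter, Set.inter_univ, rho_eq_muSet_nbrSet]

theorem rhoIn_add_rhoIn_compl (B : Set V) (v : V) :
    rhoIn A B v + rhoIn A Bᶜ v = rho A v := by
  simp only [rhoIn_eq_muSet_inter, rho_eq_muSet_nbrSet]
  rw [← muSet_union (disjoint_compl_right.mono Set.inter_subset_right Set.inter_subset_right),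
    Set.inter_union_compl]

theorem rhoPIn_add_rhoMIn (hA : ∀ u v, A u v → ¬ A v u) (B : Set V) (v : V) :
    rhoPIn A B v + rhoMIn A B v = rhoIn A B v := by
  have hdisj : Disjoint {u | A v u ∧ u ∈ B} {u | A u v ∧ u ∈ B} :=
    Set.disjoint_left.2 fun u hu hu' => hA _ _ hu.1 hu'.1
  calc rhoPIn A B v + rhoMIn A B v = muSet ({u | A v u ∧ u ∈ B} ∪ {u | A u v ∧ u ∈ B}) :=
        (muSet_union hdisj).symm
    _ = rhoIn A B v := by
        rw [rhoIn_eq_muSet_inter]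
        congr 1
        ext u
        exact or_and_right.symm

theorem rhoIn_compl_nbrSet_le (c v : V) : rhoIn A (nbrSet A v)ᶜ c ≤ 1 - rho A v := by
  have h := muSet_add_muSet_compl_le_one (nbrSet A v)
  rw [← rho_eq_muSet_nbrSet] at h
  linarith [rhoIn_le_muSet (A := A) (nbrSet A v)ᶜ c]

theorem alphaX_pos (h : (bigX A).Nonempty) : 0 < alphaX A := muSet_pos h

theorem alphaX_le_one : alphaX A ≤ 1 := muSet_le_one _

theorem Dmin_le_one (h : (bigX A).Nonempty) : Dmin A ≤ 1 := by
  obtain ⟨x, hx⟩ := h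
  exact (csInf_le (Set.toFinite _).bddBelow (Set.mem_image_of_mem _ hx)).trans (rho_le_one x)

theorem exists_rhoIn_eq_betaY (h : (bigY A).Nonempty) :
    ∃ y ∈ bigY A, rhoIn A (bigY A) y = betaY A :=
  (h.image _).csSup_mem (Set.toFinite _)

end Density

section Embeddings

variable {k l : ℕ}

/-- The `i`-th out-leaf of `S_{k,l}`. -/
def outLeaf (k l : ℕ) (i : Fin k) : Fin (k + l + 1) := (Fin.castAdd l i).succ

/-- The `j`-th in-leaf of `S_{k,l}`. -/
def inLeaf (k l : ℕ) (j : Fin l) : Fin (k + l + 1) := (Fin.natAdd k j).succ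

variable {V : Type*} {A : V → V → Prop} {φ : Fin (k + l + 1) → V}

theorem IsStarEmb.arc_outLeaf (h : IsStarEmb k l A φ) (i : Fin k) :
    A (φ 0) (φ (outLeaf k l i)) :=
  (h.2 _ _).1 (.inl ⟨rfl, by simp [outLeaf], by simp [outLeaf]⟩)

theorem IsStarEmb.arc_inLeaf (h : IsStarEmb k l A φ) (j : Fin l) :
    A (φ (inLeaf k l j)) (φ 0) :=
  (h.2 _ _).1 (.inr ⟨rfl, by simp [inLeaf]⟩)

theorem IsStarEmb.succ_notMem_nbrSet (h : IsStarEmb k l A φ) (i j : Fin (k + l)) :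
    φ i.succ ∉ nbrSet A (φ j.succ) := by
  simp [nbrSet, ← h.2, StarArc]

theorem natCard_le_prod_ncard {ι : Type*} [Fintype ι] {W : ι → Type*} [∀ i, Finite (W i)]
    (S : (∀ i, W i) → Prop) (T : ∀ i, Set (W i)) (h : ∀ φ, S φ → ∀ i, φ i ∈ T i) :
    Nat.card {φ // S φ} ≤ ∏ i, (T i).ncard := by
  let f : {φ // S φ} → ∀ i, T i := fun φ i => ⟨φ.1 i, h φ.1 φ.2 i⟩
  have hf : Function.Injective f := fun φ ψ hφψ =>
    Subtype.ext (funext fun i => congrArg Subtype.val (congrFun hφψ i))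
  simpa only [Nat.card_pi, Nat.card_coe_set_eq] using Nat.card_le_card_of_injective f hf

variable [Fintype V]

theorem sCondOn_mono {c : V} {P Q : (Fin (k + l + 1) → V) → Prop}
    (h : ∀ φ, IsStarEmb k l A φ → φ 0 = c → P φ → Q φ) :
    sCondOn k l A c P ≤ sCondOn k l A c Q := by
  unfold sCondOn
  gcongr
  exact Nat.card_mono (Set.toFinite {φ | IsStarEmb k l A φ ∧ φ 0 = c ∧ Q φ})
    fun φ hφ => ⟨hφ.1, hφ.2.1, h φ hφ.1 hφ.2.1 hφ.2.2⟩

theorem sCondOn_eq_zero {c : V} {P : (Fin (k + l + 1) → V) → Prop}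
    (h : ∀ φ, IsStarEmb k l A φ → φ 0 = c → ¬ P φ) : sCondOn k l A c P = 0 := by
  have : IsEmpty {φ : Fin (k + l + 1) → V // IsStarEmb k l A φ ∧ φ 0 = c ∧ P φ} :=
    ⟨fun φ => h φ.1 φ.2.1 φ.2.2.1 φ.2.2.2⟩
  simp [sCondOn]

theorem natCard_or_le {α : Type*} (p q r : α → Prop) :
    Nat.card {a // p a ∧ (q a ∨ r a)} ≤ Nat.card {a // p a ∧ q a} + Nat.card {a // p a ∧ r a} := by
  simp only [and_or_left]
  exact Set.ncard_union_le {a | p a ∧ q a} {a | p a ∧ r a}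

theorem natCard_exists_le_sum {α ι : Type*} [Fintype ι] (p : ι → α → Prop) :
    Nat.card {a // ∃ i, p i a} ≤ ∑ i, Nat.card {a // p i a} := by
  have h := Set.ncard_iUnion_le_of_fintype fun i => {a | p i a}
  rwa [Set.iUnion_ofPred] at h

theorem sCondOn_or_le (c : V) (P Q : (Fin (k + l + 1) → V) → Prop) :
    sCondOn k l A c (fun φ => P φ ∨ Q φ) ≤ sCondOn k l A c P + sCondOn k l A c Q := by
  unfold sCondOn
  rw [← add_div, ← Nat.cast_add]
  gcongr
  simp only [← and_assoc]
  exact natCard_or_le _ P Q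

theorem sCondOn_exists_le {ι : Type*} [Fintype ι] (c : V)
    (P : ι → (Fin (k + l + 1) → V) → Prop) :
    sCondOn k l A c (fun φ => ∃ i, P i φ) ≤ ∑ i, sCondOn k l A c (P i) := by
  unfold sCondOn
  rw [← Finset.sum_div, ← Nat.cast_sum]
  gcongr
  simp only [← exists_and_left]
  exact natCard_exists_le_sum _

theorem sCond_zero_eq_sCondOn (c : V) : sCond k l A 0 c = sCondOn k l A c fun _ => True := by
  simp only [sCond, sCondOn, and_true]

theorem sCond_le_sum_sCondOn (z : Fin (k + l + 1)) (v : V) :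
    sCond k l A z v ≤ ∑ c, sCondOn k l A c fun φ => φ z = v := by
  unfold sCond sCondOn
  rw [← Finset.sum_div, ← Nat.cast_sum]
  gcongr
  simpa only [exists_and_left, exists_eq_left'] using
    natCard_exists_le_sum fun c φ => IsStarEmb k l A φ ∧ φ 0 = c ∧ φ z = v

theorem sCondOn_le_prod_muSet {c : V} {P : (Fin (k + l + 1) → V) → Prop}
    (S : Fin k → Set V) (T : Fin l → Set V)
    (hS : ∀ φ, IsStarEmb k l A φ → φ 0 = c → P φ → ∀ i, φ (outLeaf k l i) ∈ S i)
    (hT : ∀ φ, IsStarEmb k l A φ → φ 0 = c → P φ → ∀ j, φ (inLeaf k l j) ∈ T j) :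
    sCondOn k l A c P ≤ (∏ i, muSet (S i)) * ∏ j, muSet (T j) := by
  have hcard := natCard_le_prod_ncard (fun φ => IsStarEmb k l A φ ∧ φ 0 = c ∧ P φ)
    (Fin.cons {c} (Fin.append S T) : Fin (k + l + 1) → Set V) ?_
  · rw [Fin.prod_univ_succ, Fin.prod_univ_add] at hcard
    simp only [Fin.cons_zero, Fin.cons_succ, Fin.append_left, Fin.append_right,
      Set.ncard_singleton, one_mul] at hcard
    simp only [sCondOn, muSet_eq_ncard_div, Finset.prod_div_distrib, Finset.prod_const,
      Finset.card_univ, Fintype.card_fin, div_mul_div_comm, ← pow_add]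
    gcongr
    exact_mod_cast hcard
  · rintro φ ⟨hφ, hc, hP⟩
    refine Fin.cases (by simpa using hc) (Fin.addCases (fun i => ?_) fun j => ?_)
    · simpa [outLeaf] using hS φ hφ hc hP i
    · simpa [inLeaf] using hT φ hφ hc hP j

end Embeddings

section StarConstant

variable {k l m : ℕ}

theorem lam0_comm (k l : ℕ) : lam0 k l = lam0 l k := by
  unfold lam0
  rw [mul_comm ((k : ℝ) ^ k), add_comm (k : ℝ), add_comm k]

theorem lam0_self (k : ℕ) : lam0 k k = 1 / 2 ^ (2 * k) := by
  rcases Nat.eq_zero_or_pos k with rfl | hk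
  · simp [lam0]
  · unfold lam0
    rw [← two_mul, ← two_mul, mul_pow, ← pow_add, ← two_mul]
    field_simp

theorem lam0_eq_div_pow_mul_div_pow (k l : ℕ) :
    lam0 k l = ((k : ℝ) / (k + l)) ^ k * ((l : ℝ) / (k + l)) ^ l := by
  rw [lam0, div_pow, div_pow, div_mul_div_comm, ← pow_add]

theorem lam0_zero_right (k : ℕ) : lam0 k 0 = 1 := by
  rcases Nat.eq_zero_or_pos k with rfl | hk
  · simp [lam0]
  · have : (k : ℝ) ≠ 0 := by positivity
    simp [lam0, this]

theorem pow_mul_pow_le_lam0_mul_add_pow (k l : ℕ) {a b : ℝ} (ha : 0 ≤ a) (hb : 0 ≤ b) :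
    a ^ k * b ^ l ≤ lam0 k l * (a + b) ^ (k + l) := by
  rcases Nat.eq_zero_or_pos k with rfl | hk
  · rw [lam0_comm, lam0_zero_right, pow_zero, zero_add]
    gcongr
    linarith
  rcases Nat.eq_zero_or_pos l with rfl | hl
  · rw [lam0_zero_right, pow_zero, add_zero, mul_comm]
    gcongr
    linarith
  have hgm := Real.geom_mean_le_arith_mean2_weighted (w₁ := k / ((k : ℝ) + l))
    (w₂ := l / ((k : ℝ) + l)) (p₁ := a / k) (p₂ := b / l) (by positivity) (by positivity)
    (by positivity) (by positivity) (by field_simp)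
  have hpow := pow_le_pow_left₀ (by positivity) hgm (k + l)
  rw [mul_pow, ← Real.rpow_mul_natCast (by positivity), ← Real.rpow_mul_natCast (by positivity),
    Nat.cast_add, div_mul_cancel₀ _ (by positivity), div_mul_cancel₀ _ (by positivity),
    Real.rpow_natCast, Real.rpow_natCast] at hpow
  have hmean : (k : ℝ) / (k + l) * (a / k) + l / (k + l) * (b / l) = (a + b) / (k + l) := by
    field_simp
  rw [hmean, div_pow, div_pow, div_pow, div_mul_div_comm, div_le_iff₀ (by positivity)] at hpow
  exact hpow.trans_eq (by unfold lam0; ring)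

theorem one_le_lam0_mul_two_pow (k l : ℕ) : 1 ≤ lam0 k l * 2 ^ (k + l) := by
  simpa [one_add_one_eq_two] using
    pow_mul_pow_le_lam0_mul_add_pow k l zero_le_one (zero_le_one (α := ℝ))

theorem lam0_pos (k l : ℕ) : 0 < lam0 k l :=
  pos_of_mul_pos_left (zero_lt_one.trans_le (one_le_lam0_mul_two_pow k l)) (by positivity)

/-- The factor `mᵐ/(m-1)^{m-1}`. Its product with `λ₀(k,l)`, where `m = k + l`, dominates the
constants `k·λ₀(k-1,l)` and `l·λ₀(k,l-1)` that arise once one leaf of the star is prescribed. -/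
noncomputable def leafFactor (m : ℕ) : ℝ := (m : ℝ) ^ m / ((m : ℝ) - 1) ^ (m - 1)

theorem leafFactor_pos (hm : 2 ≤ m) : 0 < leafFactor m := by
  have : (2 : ℝ) ≤ m := mod_cast hm
  have : 0 < (m : ℝ) - 1 := by linarith
  unfold leafFactor
  positivity

theorem leafFactor_mul_lam0_one (hm : 2 ≤ m) : leafFactor m * lam0 1 (m - 1) = 1 := by
  have : (2 : ℝ) ≤ m := mod_cast hm
  have : 0 < (m : ℝ) - 1 := by linarith
  unfold leafFactor lam0
  rw [Nat.cast_sub (by omega), Nat.cast_one, add_sub_cancel, Nat.add_sub_cancel' (by omega)]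
  field_simp

theorem leafFactor_mul_lam0 (hk : 1 ≤ k) :
    leafFactor (k + l) * lam0 k l = (k : ℝ) ^ k * l ^ l / ((k : ℝ) + l - 1) ^ (k + l - 1) := by
  have : (0 : ℝ) < k := mod_cast hk
  unfold leafFactor lam0
  push_cast
  field_simp

theorem mul_lam0_pred_left_le (hk : 1 ≤ k) (hl : 1 ≤ l) :
    k * lam0 (k - 1) l ≤ leafFactor (k + l) * lam0 k l := by
  have hk' : (1 : ℝ) ≤ k := mod_cast hk
  have : (0 : ℝ) < k + l - 1 := by have : (1 : ℝ) ≤ l := mod_cast hl; linarith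
  have hpred : ((k : ℝ) - 1) ^ (k - 1) ≤ k ^ (k - 1) :=
    pow_le_pow_left₀ (by linarith) (by linarith) _
  calc k * lam0 (k - 1) l
      = k * (k - 1 : ℝ) ^ (k - 1) * l ^ l / ((k : ℝ) + l - 1) ^ (k + l - 1) := by
        rw [lam0, Nat.cast_sub hk, Nat.sub_add_comm hk, Nat.cast_one, sub_add_eq_add_sub]
        ring
    _ ≤ k * k ^ (k - 1) * l ^ l / ((k : ℝ) + l - 1) ^ (k + l - 1) := by gcongr
    _ = leafFactor (k + l) * lam0 k l := by
        rw [leafFactor_mul_lam0 hk, mul_pow_sub_one (by omega)]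

theorem mul_lam0_pred_right_le (hk : 1 ≤ k) (hl : 1 ≤ l) :
    l * lam0 k (l - 1) ≤ leafFactor (k + l) * lam0 k l := by
  rw [lam0_comm k, lam0_comm k, add_comm k]
  exact mul_lam0_pred_left_le hl hk

theorem lam1_eq_mul_lam0 (hl : 1 ≤ l) : lam1 k l = l * lam0 k (l - 1) := by
  rw [lam1, lam0, Nat.cast_sub hl, Nat.cast_one, add_sub_assoc, Nat.add_sub_assoc hl]
  ring

theorem lam1_le_leafFactor_mul_lam0 (hk : 1 ≤ k) (hl : 1 ≤ l) :
    lam1 k l ≤ leafFactor (k + l) * lam0 k l :=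
  (lam1_eq_mul_lam0 hl).trans_le (mul_lam0_pred_right_le hk hl)

end StarConstant

section LeafCounts

variable {k l : ℕ} {V : Type*} {A : V → V → Prop}

theorem indicator_nbrSet (hA : ∀ u v, A u v → ¬ A v u) (f : V → ℝ) (v c : V) :
    (nbrSet A v).indicator f c = {c | A v c}.indicator f c + {c | A c v}.indicator f c :=
  congrFun (Set.indicator_union_of_disjoint (Set.disjoint_left.2 fun _ h => hA _ _ h) f) c

variable [Fintype V]

theorem prod_muSet_update_singleton {p : ℕ} (S : Set V) (i : Fin p) (v : V) :
    ∏ j, muSet (Function.update (fun _ => S) i {v} j) =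
      muSet S ^ (p - 1) / Fintype.card V := by
  rw [Finset.prod_congr rfl fun j _ => Function.apply_update (fun _ => muSet) _ i {v} j,
    Finset.prod_update_of_mem (Finset.mem_univ i), muSet_singleton, Finset.prod_const,
    Finset.card_sdiff_of_subset (Finset.subset_univ _)]
  simp [div_eq_inv_mul]

theorem sCondOn_outLeaf_eq_le (c v : V) (i : Fin k) :
    sCondOn k l A c (fun φ => φ (outLeaf k l i) = v) ≤
      rhoPIn A (nbrSet A v)ᶜ c ^ (k - 1) * rhoMIn A (nbrSet A v)ᶜ c ^ l / Fintype.card V := by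
  refine (sCondOn_le_prod_muSet
    (Function.update (fun _ => {u | A c u ∧ u ∈ (nbrSet A v)ᶜ}) i {v})
    (fun _ => {u | A u c ∧ u ∈ (nbrSet A v)ᶜ}) ?_ ?_).trans_eq ?_
  · rintro φ hφ rfl rfl i'
    obtain rfl | hi := eq_or_ne i' i
    · simp
    · rw [Function.update_of_ne hi]
      exact ⟨hφ.arc_outLeaf i', hφ.succ_notMem_nbrSet _ _⟩
  · rintro φ hφ rfl rfl j
    exact ⟨hφ.arc_inLeaf j, hφ.succ_notMem_nbrSet _ _⟩
  · rw [prod_muSet_update_singleton, Fin.prod_const, div_mul_eq_mul_div]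
    rfl

theorem sCondOn_inLeaf_eq_le (c v : V) (j : Fin l) :
    sCondOn k l A c (fun φ => φ (inLeaf k l j) = v) ≤
      rhoPIn A (nbrSet A v)ᶜ c ^ k * rhoMIn A (nbrSet A v)ᶜ c ^ (l - 1) / Fintype.card V := by
  refine (sCondOn_le_prod_muSet (fun _ => {u | A c u ∧ u ∈ (nbrSet A v)ᶜ})
    (Function.update (fun _ => {u | A u c ∧ u ∈ (nbrSet A v)ᶜ}) j {v}) ?_ ?_).trans_eq ?_
  · rintro φ hφ rfl rfl i
    exact ⟨hφ.arc_outLeaf i, hφ.succ_notMem_nbrSet _ _⟩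
  · rintro φ hφ rfl rfl j'
    obtain rfl | hj := eq_or_ne j' j
    · simp
    · rw [Function.update_of_ne hj]
      exact ⟨hφ.arc_inLeaf j', hφ.succ_notMem_nbrSet _ _⟩
  · rw [prod_muSet_update_singleton, Fin.prod_const, mul_div_assoc]
    rfl

/-- An upper bound, up to the number of leaves of the same kind, for the probability that the star
centred at `c` is embedded with a prescribed leaf at `v`, valid for every neighbour `c` of `v`. -/
noncomputable def leafCap (k l : ℕ) (A : V → V → Prop) (v c : V) : ℝ :=
  leafFactor (k + l) * lam0 k l * rhoIn A (nbrSet A v)ᶜ c ^ (k + l - 1) / Fintype.card V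

theorem mul_sCondOn_outLeaf_eq_le (hA : ∀ u v, A u v → ¬ A v u) (hl : 1 ≤ l) (c v : V)
    (i : Fin k) :
    k * sCondOn k l A c (fun φ => φ (outLeaf k l i) = v) ≤
      {c | A c v}.indicator (leafCap k l A v) c := by
  have hk : 1 ≤ k := i.pos
  by_cases hcv : c ∈ {c | A c v}
  · rw [Set.indicator_of_mem hcv]
    calc k * sCondOn k l A c (fun φ => φ (outLeaf k l i) = v)
        ≤ k * ((lam0 (k - 1) l * rhoIn A (nbrSet A v)ᶜ c ^ (k - 1 + l)) / Fintype.card V) := by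
          rw [← rhoPIn_add_rhoMIn hA]
          gcongr
          refine (sCondOn_outLeaf_eq_le c v i).trans ?_
          gcongr ?_ / _
          exact pow_mul_pow_le_lam0_mul_add_pow _ _ (rhoPIn_nonneg _ c) (rhoMIn_nonneg _ c)
      _ = k * lam0 (k - 1) l * rhoIn A (nbrSet A v)ᶜ c ^ (k + l - 1) / Fintype.card V := by
          rw [Nat.sub_add_comm hk]
          ring
      _ ≤ leafCap k l A v c := by
          have := rhoIn_nonneg (A := A) (nbrSet A v)ᶜ c
          unfold leafCap
          gcongr ?_ * _ / _
          exact mul_lam0_pred_left_le hk hl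
  · rw [Set.indicator_of_notMem hcv, sCondOn_eq_zero, mul_zero]
    rintro φ hφ rfl rfl
    exact hcv (hφ.arc_outLeaf i)

theorem mul_sCondOn_inLeaf_eq_le (hA : ∀ u v, A u v → ¬ A v u) (hk : 1 ≤ k) (c v : V)
    (j : Fin l) :
    l * sCondOn k l A c (fun φ => φ (inLeaf k l j) = v) ≤
      {c | A v c}.indicator (leafCap k l A v) c := by
  have hl : 1 ≤ l := j.pos
  by_cases hcv : c ∈ {c | A v c}
  · rw [Set.indicator_of_mem hcv]
    calc l * sCondOn k l A c (fun φ => φ (inLeaf k l j) = v)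
        ≤ l * ((lam0 k (l - 1) * rhoIn A (nbrSet A v)ᶜ c ^ (k + (l - 1))) / Fintype.card V) := by
          rw [← rhoPIn_add_rhoMIn hA]
          gcongr
          refine (sCondOn_inLeaf_eq_le c v j).trans ?_
          gcongr ?_ / _
          exact pow_mul_pow_le_lam0_mul_add_pow _ _ (rhoPIn_nonneg _ c) (rhoMIn_nonneg _ c)
      _ = l * lam0 k (l - 1) * rhoIn A (nbrSet A v)ᶜ c ^ (k + l - 1) / Fintype.card V := by
          rw [Nat.add_sub_assoc hl]
          ring
      _ ≤ leafCap k l A v c := by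
          have := rhoIn_nonneg (A := A) (nbrSet A v)ᶜ c
          unfold leafCap
          gcongr ?_ * _ / _
          exact mul_lam0_pred_right_le hk hl
  · rw [Set.indicator_of_notMem hcv, sCondOn_eq_zero, mul_zero]
    rintro φ hφ rfl rfl
    exact hcv (hφ.arc_inLeaf j)

theorem mul_sCondOn_inLeaf_add_mul_sCondOn_outLeaf_le (hA : ∀ u v, A u v → ¬ A v u) (c v : V)
    (i : Fin k) (j : Fin l) :
    l * sCondOn k l A c (fun φ => φ (inLeaf k l j) = v) +
        k * sCondOn k l A c (fun φ => φ (outLeaf k l i) = v) ≤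
      (nbrSet A v).indicator (leafCap k l A v) c := by
  rw [indicator_nbrSet hA]
  exact add_le_add (mul_sCondOn_inLeaf_eq_le hA i.pos c v j)
    (mul_sCondOn_outLeaf_eq_le hA j.pos c v i)

theorem sum_le_of_forall_natCast_mul_le {p : ℕ} (hp : 1 ≤ p) {f : Fin p → ℝ} {b : ℝ}
    (h : ∀ i, p * f i ≤ b) : ∑ i, f i ≤ b := by
  have hp' : (0 : ℝ) < p := mod_cast hp
  have hf : ∀ i ∈ Finset.univ, f i ≤ b / p := fun i _ => (le_div_iff₀' hp').2 (h i)
  simpa [mul_div_cancel₀ b hp'.ne'] using Finset.sum_le_card_nsmul _ f _ hf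

theorem sum_sCondOn_succ_eq_le (hA : ∀ u v, A u v → ¬ A v u) (hk : 1 ≤ k) (hl : 1 ≤ l)
    (c v : V) :
    ∑ z : Fin (k + l), sCondOn k l A c (fun φ => φ z.succ = v) ≤
      (nbrSet A v).indicator (leafCap k l A v) c := by
  rw [Fin.sum_univ_add, indicator_nbrSet hA, add_comm]
  exact add_le_add
    (sum_le_of_forall_natCast_mul_le hl (mul_sCondOn_inLeaf_eq_le hA hk c v))
    (sum_le_of_forall_natCast_mul_le hk (mul_sCondOn_outLeaf_eq_le hA hl c v))

end LeafCounts

section VertexBounds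

variable {k l : ℕ} {V : Type*} [Fintype V] {A : V → V → Prop} {t : ℝ}

theorem leafCap_le {c v : V} (hm : 2 ≤ k + l) (h : rhoIn A (nbrSet A v)ᶜ c ≤ t) :
    leafCap k l A v c ≤ leafFactor (k + l) * lam0 k l * t ^ (k + l - 1) / Fintype.card V := by
  have := (leafFactor_pos hm).le
  have := (lam0_pos k l).le
  have := rhoIn_nonneg (A := A) (nbrSet A v)ᶜ c
  unfold leafCap
  gcongr

theorem sum_indicator_leafCap_le (hm : 2 ≤ k + l) (B : Set V)
    (ht : ∀ c ∉ B, rho A c ≤ t) (v : V) :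
    ∑ c, (nbrSet A v).indicator (leafCap k l A v) c ≤
      leafFactor (k + l) * lam0 k l *
        (rhoIn A B v * (1 - rho A v) ^ (k + l - 1) + rhoIn A Bᶜ v * t ^ (k + l - 1)) := by
  set K := leafFactor (k + l) * lam0 k l
  calc ∑ c, (nbrSet A v).indicator (leafCap k l A v) c
      ≤ ∑ c, ((nbrSet A v ∩ B).indicator
            (fun _ => K * (1 - rho A v) ^ (k + l - 1) / Fintype.card V) c +
          (nbrSet A v ∩ Bᶜ).indicator (fun _ => K * t ^ (k + l - 1) / Fintype.card V) c) := by
        refine Finset.sum_le_sum fun c _ => ?_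
        by_cases hcv : c ∈ nbrSet A v <;> by_cases hcB : c ∈ B
        · simpa [hcv, hcB] using leafCap_le hm (rhoIn_compl_nbrSet_le c v)
        · simpa [hcv, hcB] using leafCap_le hm ((rhoIn_le_rho _ c).trans (ht c hcB))
        all_goals simp [hcv]
    _ = K * (rhoIn A B v * (1 - rho A v) ^ (k + l - 1) + rhoIn A Bᶜ v * t ^ (k + l - 1)) := by
        rw [Finset.sum_add_distrib, sum_indicator_const_div, sum_indicator_const_div,
          ← rhoIn_eq_muSet_inter, ← rhoIn_eq_muSet_inter]
        ring

theorem mul_sCond_inLeaf_add_mul_sCond_outLeaf_le (hA : ∀ u v, A u v → ¬ A v u) (v : V)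
    (i : Fin k) (j : Fin l) :
    l * sCond k l A (inLeaf k l j) v + k * sCond k l A (outLeaf k l i) v ≤
      ∑ c, (nbrSet A v).indicator (leafCap k l A v) c :=
  calc l * sCond k l A (inLeaf k l j) v + k * sCond k l A (outLeaf k l i) v
      ≤ l * ∑ c, sCondOn k l A c (fun φ => φ (inLeaf k l j) = v) +
          k * ∑ c, sCondOn k l A c (fun φ => φ (outLeaf k l i) = v) := by
        gcongr <;> exact sCond_le_sum_sCondOn _ v
    _ = ∑ c, (l * sCondOn k l A c (fun φ => φ (inLeaf k l j) = v) +
          k * sCondOn k l A c (fun φ => φ (outLeaf k l i) = v)) := by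
        rw [Finset.mul_sum, Finset.mul_sum, Finset.sum_add_distrib]
    _ ≤ ∑ c, (nbrSet A v).indicator (leafCap k l A v) c :=
        Finset.sum_le_sum fun c _ => mul_sCondOn_inLeaf_add_mul_sCondOn_outLeaf_le hA c v i j

open scoped Fin.NatCast in
theorem mul_sVert_eq (hk : 1 ≤ k) (hl : 1 ≤ l) (v : V) :
    ((k : ℝ) + l + 1) * sVert k l A v =
      sCond k l A 0 v + (l * sCond k l A (inLeaf k l ⟨0, hl⟩) v +
        k * sCond k l A (outLeaf k l ⟨0, hk⟩) v) := by
  have hin : ((k + 1 : ℕ) : Fin (k + l + 1)) = inLeaf k l ⟨0, hl⟩ :=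
    Fin.ext ((Fin.val_natCast _ _).trans (Nat.mod_eq_of_lt (by omega)))
  have hout : (1 : Fin (k + l + 1)) = outLeaf k l ⟨0, hk⟩ := by
    ext
    simp [outLeaf, Nat.mod_eq_of_lt (show 1 < k + l + 1 by omega)]
  rw [sVert, mul_div_cancel₀ _ (by positivity), hin, hout, add_assoc]

theorem mul_sVert_le (hA : ∀ u v, A u v → ¬ A v u) (hk : 1 ≤ k) (hl : 1 ≤ l) (B : Set V)
    (ht : ∀ c ∉ B, rho A c ≤ t) (v : V) :
    ((k : ℝ) + l + 1) * sVert k l A v ≤ sCond k l A 0 v + leafFactor (k + l) * lam0 k l *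
        (rhoIn A B v * (1 - rho A v) ^ (k + l - 1) + rhoIn A Bᶜ v * t ^ (k + l - 1)) := by
  rw [mul_sVert_eq hk hl]
  gcongr
  exact (mul_sCond_inLeaf_add_mul_sCond_outLeaf_le hA v _ _).trans
    (sum_indicator_leafCap_le (by omega) B ht v)

theorem sCondOn_forall_mem_le (c : V) (B : Set V) :
    sCondOn k l A c (fun φ => ∀ z : Fin (k + l), φ z.succ ∈ B) ≤
      rhoPIn A B c ^ k * rhoMIn A B c ^ l := by
  refine (sCondOn_le_prod_muSet (fun _ => {u | A c u ∧ u ∈ B}) (fun _ => {u | A u c ∧ u ∈ B})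
    ?_ ?_).trans_eq ?_
  · rintro φ hφ rfl hB i
    exact ⟨hφ.arc_outLeaf i, hB _⟩
  · rintro φ hφ rfl hB j
    exact ⟨hφ.arc_inLeaf j, hB _⟩
  · rw [Fin.prod_const, Fin.prod_const]
    rfl

theorem sCond_zero_le (hA : ∀ u v, A u v → ¬ A v u) (c : V) :
    sCond k l A 0 c ≤ lam0 k l * rho A c ^ (k + l) :=
  calc sCond k l A 0 c ≤ rhoPIn A Set.univ c ^ k * rhoMIn A Set.univ c ^ l := by
        simpa [sCond_zero_eq_sCondOn] using sCondOn_forall_mem_le (A := A) c Set.univ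
    _ ≤ lam0 k l * rho A c ^ (k + l) := by
        rw [← rhoIn_univ, ← rhoPIn_add_rhoMIn hA]
        exact pow_mul_pow_le_lam0_mul_add_pow _ _ (rhoPIn_nonneg _ c) (rhoMIn_nonneg _ c)

theorem sCondOn_exists_succ_mem_le (hA : ∀ u v, A u v → ¬ A v u) (hk : 1 ≤ k) (hl : 1 ≤ l)
    {B : Set V} (ht : ∀ v ∈ B, 1 - rho A v ≤ t) (ht₀ : 0 ≤ t) (c : V) :
    sCondOn k l A c (fun φ => ∃ z : Fin (k + l), φ z.succ ∈ B) ≤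
      leafFactor (k + l) * lam0 k l * (muSet B * t ^ (k + l - 1)) := by
  classical
  have hM := (leafFactor_pos (show 2 ≤ k + l by omega)).le
  have hlam := (lam0_pos k l).le
  calc sCondOn k l A c (fun φ => ∃ z : Fin (k + l), φ z.succ ∈ B)
      ≤ sCondOn k l A c (fun φ => ∃ v : B, ∃ z : Fin (k + l), φ z.succ = v) :=
        sCondOn_mono fun φ _ _ ⟨z, hz⟩ => ⟨⟨_, hz⟩, z, rfl⟩
    _ ≤ ∑ v : B, ∑ z : Fin (k + l), sCondOn k l A c (fun φ => φ z.succ = v) :=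
        (sCondOn_exists_le c _).trans (Finset.sum_le_sum fun v _ => sCondOn_exists_le c _)
    _ ≤ ∑ _v : B, leafFactor (k + l) * lam0 k l * t ^ (k + l - 1) / Fintype.card V := by
        refine Finset.sum_le_sum fun v _ => (sum_sCondOn_succ_eq_le hA hk hl c v).trans ?_
        exact Set.indicator_apply_le'
          (fun _ => leafCap_le (by omega) ((rhoIn_compl_nbrSet_le c v).trans (ht v v.2)))
          fun _ => by positivity
    _ = leafFactor (k + l) * lam0 k l * (muSet B * t ^ (k + l - 1)) := by
        rw [Finset.sum_const, Finset.card_univ, nsmul_eq_mul, muSet, Nat.card_eq_fintype_card]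
        ring

theorem sCond_zero_le_of_forall_one_sub_rho_le (hA : ∀ u v, A u v → ¬ A v u) (hk : 1 ≤ k)
    (hl : 1 ≤ l) {B : Set V} (ht : ∀ v ∈ B, 1 - rho A v ≤ t) (ht₀ : 0 ≤ t) (c : V) :
    sCond k l A 0 c ≤ rhoPIn A Bᶜ c ^ k * rhoMIn A Bᶜ c ^ l +
      leafFactor (k + l) * lam0 k l * (muSet B * t ^ (k + l - 1)) :=
  calc sCond k l A 0 c
      ≤ sCondOn k l A c (fun φ => (∀ z : Fin (k + l), φ z.succ ∈ Bᶜ) ∨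
          ∃ z : Fin (k + l), φ z.succ ∈ B) := by
        rw [sCond_zero_eq_sCondOn]
        exact sCondOn_mono fun φ _ _ _ => (Classical.em _).symm.imp_left not_exists.1
    _ ≤ _ := (sCondOn_or_le c _ _).trans
        (add_le_add (sCondOn_forall_mem_le c Bᶜ) (sCondOn_exists_succ_mem_le hA hk hl ht ht₀ c))

end VertexBounds

section Estimates

variable {m : ℕ}

/-- The value `(m/(m+1))ᵐ`: `λ₀` times it is a lower bound for `(m+1)·OPT(k,l)`. -/
noncomputable def starThreshold (m : ℕ) : ℝ := ((m : ℝ) / (m + 1)) ^ m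

/-- The gap `6/(5m)`: degrees in `X` exceed `1` minus it, and `β` is at most it. The constant `6/5`
is large enough for `e^{-6/5} < e^{-1}` to leave room for the error terms. -/
noncomputable def degreeGap (m : ℕ) : ℝ := 6 / (5 * m)

theorem degreeGap_pos (hm : 1 ≤ m) : 0 < degreeGap m := by
  unfold degreeGap; positivity

theorem degreeGap_le_half (hm : 3 ≤ m) : degreeGap m ≤ 1 / 2 := by
  have : (3 : ℝ) ≤ m := mod_cast hm
  rw [degreeGap, div_le_div_iff₀ (by positivity) two_pos]
  linarith

theorem degreeGap_le_of_seven_le (hm : 7 ≤ m) : degreeGap m ≤ 6 / 35 := by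
  have : (7 : ℝ) ≤ m := mod_cast hm
  rw [degreeGap]
  gcongr
  linarith

theorem leafFactor_le (hm : 2 ≤ m) : leafFactor m ≤ 2.7183 * m := by
  have hm' : (2 : ℝ) ≤ m := mod_cast hm
  have hpos : 0 < (m : ℝ) - 1 := by linarith
  have hexp := Real.one_add_inv_pow_le_exp (n := m - 1)
  rw [Nat.cast_sub (by omega), Nat.cast_one] at hexp
  calc leafFactor m = (1 + ((m : ℝ) - 1)⁻¹) ^ (m - 1) * m := by
        rw [leafFactor, ← pow_sub_one_mul (by omega), mul_div_right_comm, ← div_pow,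
          show 1 + ((m : ℝ) - 1)⁻¹ = m / (m - 1) by field_simp; ring]
    _ ≤ 2.7183 * m := by
        gcongr
        linarith [Real.exp_one_lt_d9]

theorem le_starThreshold (hm : 1 ≤ m) : 0.3678 ≤ starThreshold m := by
  have hexp := Real.one_add_inv_pow_le_exp (n := m)
  calc (0.3678 : ℝ) ≤ (2.7182818286 : ℝ)⁻¹ := by norm_num
    _ ≤ ((1 + (m : ℝ)⁻¹) ^ m)⁻¹ := by
        gcongr
        exact hexp.trans Real.exp_one_lt_d9.le
    _ = starThreshold m := by
        rw [starThreshold, ← inv_pow]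
        congr 1
        field_simp

theorem leafFactor_mul_degreeGap_le (hm : 2 ≤ m) : leafFactor m * degreeGap m ≤ 3.262 := by
  have : (2 : ℝ) ≤ m := mod_cast hm
  calc leafFactor m * degreeGap m ≤ 2.7183 * m * degreeGap m := by
        gcongr
        · exact (degreeGap_pos (by omega)).le
        · exact leafFactor_le hm
    _ = 2.7183 * (6 / 5) := by unfold degreeGap; field_simp
    _ ≤ 3.262 := by norm_num

theorem leafFactor_mul_half_pow_le (hm : 7 ≤ m) : leafFactor m * (1 / 2) ^ (m - 1) ≤ 0.2975 := by
  have hdecay : (m : ℝ) * (1 / 2) ^ (m - 1) ≤ 7 / 64 := by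
    induction m, hm using Nat.le_induction with
    | base => norm_num
    | succ m hm ih =>
      have : (7 : ℝ) ≤ m := mod_cast hm
      have hpow : (1 / 2 : ℝ) ^ m = (1 / 2) ^ (m - 1) * (1 / 2) :=
        (pow_sub_one_mul (by omega) _).symm
      have : (0 : ℝ) < (1 / 2) ^ (m - 1) := by positivity
      rw [Nat.add_sub_cancel, hpow]
      push_cast
      nlinarith
  calc leafFactor m * (1 / 2) ^ (m - 1) ≤ 2.7183 * m * (1 / 2) ^ (m - 1) := by
        gcongr
        exact leafFactor_le (by omega)
    _ ≤ 0.2975 := by linarith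

theorem one_sub_degreeGap_pow_le (hm : 2 ≤ m) : (1 - degreeGap m) ^ m ≤ 0.3016 := by
  have : (2 : ℝ) ≤ m := mod_cast hm
  have hexp : 3.316 ≤ Real.exp (6 / 5) :=
    calc (3.316 : ℝ) ≤ 2.7182818283 * (1 + 1 / 5 + (1 / 5) ^ 2 / 2) := by norm_num
      _ ≤ Real.exp 1 * Real.exp (1 / 5) := by
          gcongr
          · exact Real.exp_one_gt_d9.le
          · exact Real.quadratic_le_exp_of_nonneg (by norm_num)
      _ = Real.exp (6 / 5) := by rw [← Real.exp_add]; norm_num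
  calc (1 - degreeGap m) ^ m = (1 - 6 / 5 / m) ^ m := by rw [degreeGap, div_div]
    _ ≤ Real.exp (-(6 / 5)) := Real.one_sub_div_pow_le_exp_neg (by linarith)
    _ ≤ (3.316 : ℝ)⁻¹ := by rw [Real.exp_neg]; gcongr
    _ ≤ 0.3016 := by norm_num

theorem leafFactor_six : leafFactor 6 = 46656 / 3125 := by norm_num [leafFactor]

theorem starThreshold_six : starThreshold 6 = 46656 / 117649 := by norm_num [starThreshold]

theorem degreeGap_six : degreeGap 6 = 1 / 5 := by norm_num [degreeGap]

theorem leafFactor_mul_degreeGap_pow_le (hm : 7 ≤ m) :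
    leafFactor m * degreeGap m ^ (m - 2) ≤ 0.003 := by
  have hδ := (degreeGap_pos (show 1 ≤ m by omega)).le
  have hδ' := degreeGap_le_of_seven_le hm
  calc leafFactor m * degreeGap m ^ (m - 2)
      = leafFactor m * degreeGap m * degreeGap m ^ (m - 3) := by
        rw [mul_assoc, ← pow_succ', show m - 3 + 1 = m - 2 by omega]
    _ ≤ 3.262 * (6 / 35) ^ (m - 3) := by
        gcongr
        exact leafFactor_mul_degreeGap_le (by omega)
    _ ≤ 3.262 * (6 / 35) ^ 4 := by
        gcongr 3.262 * ?_
        exact pow_le_pow_of_le_one (by norm_num) (by norm_num) (by omega)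
    _ ≤ 0.003 := by norm_num

theorem two_pow_mul_degreeGap_pow_le (hm : 7 ≤ m) : 2 ^ m * degreeGap m ^ (m - 2) ≤ 0.02 := by
  have hδ := (degreeGap_pos (show 1 ≤ m by omega)).le
  have hδ' := degreeGap_le_of_seven_le hm
  calc 2 ^ m * degreeGap m ^ (m - 2) = 4 * (2 * degreeGap m) ^ (m - 2) := by
        rw [mul_pow, ← mul_assoc, show (4 : ℝ) = 2 ^ 2 by norm_num, ← pow_add,
          show 2 + (m - 2) = m by omega]
    _ ≤ 4 * (2 * (6 / 35)) ^ (m - 2) := by gcongr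
    _ ≤ 4 * (2 * (6 / 35)) ^ 5 := by
        gcongr 4 * ?_
        exact pow_le_pow_of_le_one (by norm_num) (by norm_num) (by omega)
    _ ≤ 0.02 := by norm_num

theorem half_pow_le_of_seven_le (hm : 7 ≤ m) : (1 / 2 : ℝ) ^ m ≤ 1 / 128 :=
  (pow_le_pow_of_le_one (by norm_num) (by norm_num) hm).trans_eq (by norm_num)

theorem leafFactor_mul_degreeGap_mul_half_pow_le (hm : 7 ≤ m) :
    leafFactor m * degreeGap m * (1 / 2) ^ (m - 1) ≤ 0.051 :=
  calc leafFactor m * degreeGap m * (1 / 2) ^ (m - 1)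
      = degreeGap m * (leafFactor m * (1 / 2) ^ (m - 1)) := by ring
    _ ≤ 6 / 35 * 0.2975 := by
        have := leafFactor_pos (show 2 ≤ m by omega)
        gcongr
        · exact degreeGap_le_of_seven_le hm
        · exact leafFactor_mul_half_pow_le hm
    _ ≤ 0.051 := by norm_num

theorem two_add_leafFactor_mul_half_pow_lt (hm : 6 ≤ m) :
    (2 + leafFactor m) * (1 / 2) ^ m < starThreshold m := by
  obtain rfl | hm := hm.eq_or_lt
  · norm_num [leafFactor_six, starThreshold_six]
  · calc (2 + leafFactor m) * (1 / 2) ^ m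
        = 2 * (1 / 2) ^ m + leafFactor m * (1 / 2) ^ (m - 1) * (1 / 2) := by
          rw [mul_assoc (leafFactor m), pow_sub_one_mul (by omega), add_mul]
      _ < starThreshold m := by
          linarith [half_pow_le_of_seven_le hm, leafFactor_mul_half_pow_le hm,
            le_starThreshold (show 1 ≤ m by omega)]

theorem one_sub_degreeGap_pow_add_leafFactor_mul_lt (hm : 6 ≤ m) :
    (1 - degreeGap m) ^ m + leafFactor m / 4 * degreeGap m ^ (m - 2) < starThreshold m := by
  obtain rfl | hm := hm.eq_or_lt
  · norm_num [leafFactor_six, starThreshold_six, degreeGap_six]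
  · linarith [one_sub_degreeGap_pow_le (show 2 ≤ m by omega), leafFactor_mul_degreeGap_pow_le hm,
      le_starThreshold (show 1 ≤ m by omega)]

theorem one_sub_degreeGap_pow_add_half_pow_lt (hm : 6 ≤ m) :
    (1 - degreeGap m) ^ m + leafFactor m * degreeGap m * (1 / 2) ^ (m - 1) + (1 / 2) ^ m <
      starThreshold m := by
  obtain rfl | hm := hm.eq_or_lt
  · norm_num [leafFactor_six, starThreshold_six, degreeGap_six]
  · linarith [one_sub_degreeGap_pow_le (show 2 ≤ m by omega), half_pow_le_of_seven_le hm,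
      leafFactor_mul_degreeGap_mul_half_pow_le hm, le_starThreshold (show 1 ≤ m by omega)]

theorem leafFactor_sq_mul_degreeGap_pow_le (hm : 6 ≤ m) :
    leafFactor m ^ 2 * degreeGap m ^ (m - 1) ≤
      (starThreshold m - (1 / 2) ^ m - leafFactor m * degreeGap m * (1 / 2) ^ (m - 1)) *
        (starThreshold m - 2 * leafFactor m * degreeGap m ^ (m - 1) -
          2 ^ m * degreeGap m ^ (m - 2)) := by
  obtain rfl | hm := hm.eq_or_lt
  · norm_num [leafFactor_six, starThreshold_six, degreeGap_six]
  have hM := leafFactor_pos (show 2 ≤ m by omega)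
  have hδ := degreeGap_pos (show 1 ≤ m by omega)
  have hq := le_starThreshold (show 1 ≤ m by omega)
  have hMδ := leafFactor_mul_degreeGap_pow_le hm
  have hsplit : degreeGap m ^ (m - 1) = degreeGap m * degreeGap m ^ (m - 2) := by
    rw [← pow_succ', show m - 2 + 1 = m - 1 by omega]
  have hMδ' : leafFactor m * degreeGap m ^ (m - 1) ≤ 0.003 * (6 / 35) :=
    calc leafFactor m * degreeGap m ^ (m - 1)
        = leafFactor m * degreeGap m ^ (m - 2) * degreeGap m := by rw [hsplit]; ring
      _ ≤ 0.003 * (6 / 35) := by gcongr; exact degreeGap_le_of_seven_le hm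
  have hleft : 0.3 ≤ starThreshold m - (1 / 2) ^ m -
      leafFactor m * degreeGap m * (1 / 2) ^ (m - 1) := by
    linarith [half_pow_le_of_seven_le hm, leafFactor_mul_degreeGap_mul_half_pow_le hm]
  have hright : 0.3 ≤ starThreshold m - 2 * leafFactor m * degreeGap m ^ (m - 1) -
      2 ^ m * degreeGap m ^ (m - 2) := by
    linarith [two_pow_mul_degreeGap_pow_le hm]
  calc leafFactor m ^ 2 * degreeGap m ^ (m - 1)
      = leafFactor m * degreeGap m * (leafFactor m * degreeGap m ^ (m - 2)) := by
        rw [hsplit]; ring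
    _ ≤ 3.262 * 0.003 := by gcongr; exact leafFactor_mul_degreeGap_le (by omega)
    _ ≤ 0.3 * 0.3 := by norm_num
    _ ≤ _ := mul_le_mul hleft hright (by norm_num) (by linarith)

end Estimates

section Convexity

variable {m : ℕ}

theorem convexOn_one_sub_pow (n : ℕ) : ConvexOn ℝ (Set.Icc 0 1) fun x : ℝ => (1 - x) ^ n :=
  ((convexOn_const 1 (convex_Icc 0 1)).sub (concaveOn_id (convex_Icc 0 1))).pow
    (fun _ hx => sub_nonneg.2 hx.2) n

theorem lt_of_convexOn_of_mem_Icc {s : Set ℝ} {f : ℝ → ℝ} {a b x y : ℝ} (hf : ConvexOn ℝ s f)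
    (ha : a ∈ s) (hb : b ∈ s) (hx : x ∈ Set.Icc a b) (hfa : f a < y) (hfb : f b < y) : f x < y :=
  (hf.le_max_of_mem_Icc ha hb hx).trans_lt (max_lt hfa hfb)

theorem mul_one_sub_pow_le (hm : 2 ≤ m) {r : ℝ} (hr : r ≤ 1) :
    r * (1 - r) ^ (m - 1) ≤ 1 / 4 * (1 - r) ^ (m - 2) := by
  have : 0 ≤ 1 - r := sub_nonneg.2 hr
  rw [← mul_pow_sub_one (show m - 1 ≠ 0 by omega), ← mul_assoc, Nat.sub_sub]
  gcongr
  linarith [sq_nonneg (r - 1 / 2)]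

theorem one_sub_degreeGap_le_of_starThreshold_le (hm : 6 ≤ m) {r : ℝ} (hr : 1 / 2 ≤ r)
    (hr₁ : r ≤ 1)
    (h : starThreshold m ≤ r ^ m + leafFactor m * (r * (1 - r) ^ (m - 1))) :
    1 - degreeGap m ≤ r := by
  by_contra! hlt
  have hM := leafFactor_pos (show 2 ≤ m by omega)
  have hδ := degreeGap_pos (show 1 ≤ m by omega)
  have := degreeGap_le_half (show 3 ≤ m by omega)
  have hconv : ConvexOn ℝ (Set.Icc 0 1)
      fun x : ℝ => x ^ m + leafFactor m / 4 * (1 - x) ^ (m - 2) :=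
    ((convexOn_pow m).subset Set.Icc_subset_Ici_self (convex_Icc 0 1)).add
      ((convexOn_one_sub_pow (m - 2)).smul (by positivity))
  have hhalf : (1 / 2 : ℝ) ^ m + leafFactor m / 4 * (1 - 1 / 2) ^ (m - 2) < starThreshold m := by
    have hpow : (1 / 2 : ℝ) ^ m = 1 / 4 * (1 / 2) ^ (m - 2) := by
      rw [show (1 / 4 : ℝ) = (1 / 2) ^ 2 by norm_num, ← pow_add, show 2 + (m - 2) = m by omega]
    have : (0 : ℝ) < (1 / 2) ^ m := by positivity
    calc (1 / 2 : ℝ) ^ m + leafFactor m / 4 * (1 - 1 / 2) ^ (m - 2)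
        = (1 + leafFactor m) * (1 / 2) ^ m := by rw [hpow]; ring
      _ < starThreshold m := by linarith [two_add_leafFactor_mul_half_pow_lt hm]
  have hend : (1 - degreeGap m) ^ m + leafFactor m / 4 * (1 - (1 - degreeGap m)) ^ (m - 2) <
      starThreshold m := by
    rw [sub_sub_cancel]
    exact one_sub_degreeGap_pow_add_leafFactor_mul_lt hm
  have hlt := lt_of_convexOn_of_mem_Icc hconv (by norm_num)
    ⟨by linarith, by linarith⟩ ⟨hr, hlt.le⟩ hhalf hend
  refine hlt.not_ge (h.trans ?_)
  calc r ^ m + leafFactor m * (r * (1 - r) ^ (m - 1))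
      ≤ r ^ m + leafFactor m * (1 / 4 * (1 - r) ^ (m - 2)) := by
        gcongr r ^ m + leafFactor m * ?_
        exact mul_one_sub_pow_le (by omega) hr₁
    _ = r ^ m + leafFactor m / 4 * (1 - r) ^ (m - 2) := by ring

theorem le_degreeGap_of_starThreshold_le (hm : 6 ≤ m) {b : ℝ} (hb : b ≤ 1 / 2)
    (h : starThreshold m ≤ (1 - b) ^ m + leafFactor m * b * (1 / 2) ^ (m - 1) + (1 / 2) ^ m) :
    b ≤ degreeGap m := by
  by_contra! hlt
  have hM := leafFactor_pos (show 2 ≤ m by omega)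
  have hδ := degreeGap_pos (show 1 ≤ m by omega)
  have := degreeGap_le_half (show 3 ≤ m by omega)
  have hconv : ConvexOn ℝ (Set.Icc 0 1)
      fun x : ℝ => (1 - x) ^ m + leafFactor m * x * (1 / 2) ^ (m - 1) + (1 / 2) ^ m := by
    have hlin : ConvexOn ℝ (Set.Icc 0 1)
        fun x : ℝ => leafFactor m * x * (1 / 2) ^ (m - 1) := by
      simpa [mul_right_comm] using (convexOn_id (convex_Icc (0 : ℝ) 1)).smul
        (show 0 ≤ leafFactor m * (1 / 2) ^ (m - 1) by positivity)
    exact ((convexOn_one_sub_pow m).add hlin).add_const _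
  have hend : (1 - 1 / 2) ^ m + leafFactor m * (1 / 2) * (1 / 2) ^ (m - 1) + (1 / 2) ^ m <
      starThreshold m :=
    calc (1 - 1 / 2 : ℝ) ^ m + leafFactor m * (1 / 2) * (1 / 2) ^ (m - 1) + (1 / 2) ^ m
        = (2 + leafFactor m) * (1 / 2) ^ m := by
          rw [mul_assoc (leafFactor m), mul_pow_sub_one (by omega)]; ring
      _ < starThreshold m := two_add_leafFactor_mul_half_pow_lt hm
  exact (lt_of_convexOn_of_mem_Icc hconv ⟨hδ.le, by linarith⟩ (by norm_num) ⟨hlt.le, hb⟩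
    (one_sub_degreeGap_pow_add_half_pow_lt hm) hend).not_ge h

theorem leafFactor_div_mul_degreeGap_pow_le (hm : 6 ≤ m) {a : ℝ} (ha : 0 < a)
    (h : starThreshold m - (1 / 2) ^ m - leafFactor m * degreeGap m * (1 / 2) ^ (m - 1) ≤
      leafFactor m * a) :
    leafFactor m / a * degreeGap m ^ (m - 1) ≤
      starThreshold m - 2 * leafFactor m * degreeGap m ^ (m - 1) -
        2 ^ m * degreeGap m ^ (m - 2) := by
  have hM := leafFactor_pos (show 2 ≤ m by omega)
  have hδ := degreeGap_pos (show 1 ≤ m by omega)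
  have hδ' := degreeGap_le_half (show 3 ≤ m by omega)
  have hprod := leafFactor_sq_mul_degreeGap_pow_le hm
  set L := starThreshold m - (1 / 2) ^ m - leafFactor m * degreeGap m * (1 / 2) ^ (m - 1)
  set R := starThreshold m - 2 * leafFactor m * degreeGap m ^ (m - 1) -
    2 ^ m * degreeGap m ^ (m - 2)
  have hLpos : 0 < L := by
    have : 0 ≤ (1 - degreeGap m) ^ m := pow_nonneg (by linarith) m
    linarith [one_sub_degreeGap_pow_add_half_pow_lt hm]
  have hRpos : 0 < R := (pos_iff_pos_of_mul_pos (lt_of_lt_of_le (by positivity) hprod)).1 hLpos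
  have hscaled : leafFactor m * (leafFactor m * degreeGap m ^ (m - 1)) ≤
      leafFactor m * (a * R) :=
    calc leafFactor m * (leafFactor m * degreeGap m ^ (m - 1))
        = leafFactor m ^ 2 * degreeGap m ^ (m - 1) := by ring
      _ ≤ L * R := hprod
      _ ≤ leafFactor m * a * R := by gcongr
      _ = leafFactor m * (a * R) := mul_assoc _ _ _
  rw [div_mul_eq_mul_div, div_le_iff₀' ha]
  exact le_of_mul_le_mul_left hscaled hM

end Convexity

section Extremal

variable {k l : ℕ} {V : Type*} [Fintype V] {A : V → V → Prop} {t : ℝ}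

theorem mul_sVert_le_of_rho (hA : ∀ u v, A u v → ¬ A v u) (hk : 1 ≤ k) (hl : 1 ≤ l) (v : V) :
    ((k : ℝ) + l + 1) * sVert k l A v ≤ sCond k l A 0 v +
      leafFactor (k + l) * lam0 k l * (rho A v * (1 - rho A v) ^ (k + l - 1)) := by
  simpa [rhoIn_univ, zero_pow (show k + l - 1 ≠ 0 by omega)] using
    mul_sVert_le (t := 0) hA hk hl Set.univ (fun _ h => absurd trivial h) v

theorem starThreshold_le (hA : ∀ u v, A u v → ¬ A v u) {v : V} {p : ℝ}
    (hv : lam0 k l * starThreshold (k + l) ≤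
      sCond k l A 0 v + leafFactor (k + l) * lam0 k l * p) :
    starThreshold (k + l) ≤ rho A v ^ (k + l) + leafFactor (k + l) * p := by
  refine le_of_mul_le_mul_left (hv.trans ?_) (lam0_pos k l)
  linarith [sCond_zero_le (k := k) (l := l) hA v]

theorem one_sub_degreeGap_le_rho (hA : ∀ u v, A u v → ¬ A v u) (hk : 1 ≤ k) (hl : 1 ≤ l)
    (hm : 6 ≤ k + l) {x : V} (hx : x ∈ bigX A)
    (hv : lam0 k l * starThreshold (k + l) ≤ ((k : ℝ) + l + 1) * sVert k l A x) :
    1 - degreeGap (k + l) ≤ rho A x :=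
  one_sub_degreeGap_le_of_starThreshold_le hm hx (rho_le_one x)
    (starThreshold_le hA (hv.trans (mul_sVert_le_of_rho hA hk hl x)))

theorem starThreshold_le_of_mem_bigY (hA : ∀ u v, A u v → ¬ A v u) (hk : 1 ≤ k) (hl : 1 ≤ l)
    {y : V} (hy : y ∈ bigY A)
    (hv : lam0 k l * starThreshold (k + l) ≤ ((k : ℝ) + l + 1) * sVert k l A y) :
    starThreshold (k + l) ≤ (1 / 2) ^ (k + l) + leafFactor (k + l) *
      (rhoIn A (bigX A) y * (1 - rho A y) ^ (k + l - 1) +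
        rhoIn A (bigY A) y * (1 / 2) ^ (k + l - 1)) := by
  have hY : ∀ c ∉ bigX A, rho A c ≤ 1 / 2 := fun c hc => (not_le.1 hc).le
  have hpow : rho A y ^ (k + l) ≤ (1 / 2) ^ (k + l) :=
    pow_le_pow_left₀ (muSet_nonneg _) (hY y hy) _
  exact (starThreshold_le hA (hv.trans (mul_sVert_le hA hk hl (bigX A) hY y))).trans
    (add_le_add hpow le_rfl)

theorem rhoIn_bigY_le_degreeGap (hA : ∀ u v, A u v → ¬ A v u) (hk : 1 ≤ k) (hl : 1 ≤ l)
    (hm : 6 ≤ k + l) {y : V} (hy : y ∈ bigY A)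
    (hv : lam0 k l * starThreshold (k + l) ≤ ((k : ℝ) + l + 1) * sVert k l A y) :
    rhoIn A (bigY A) y ≤ degreeGap (k + l) := by
  set r := rhoIn A (bigX A) y
  set b := rhoIn A (bigY A) y
  have hrb : r + b = rho A y := rhoIn_add_rhoIn_compl (bigX A) y
  have hy' : rho A y < 1 / 2 := not_le.1 hy
  have hr : 0 ≤ r := rhoIn_nonneg _ y
  have hamgm : r * (1 - rho A y) ^ (k + l - 1) ≤ lam0 1 (k + l - 1) * (1 - b) ^ (k + l) := by
    have h := pow_mul_pow_le_lam0_mul_add_pow 1 (k + l - 1) hr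
      (show 0 ≤ 1 - rho A y by linarith)
    rwa [pow_one, show r + (1 - rho A y) = 1 - b by linarith, Nat.add_sub_cancel' (by omega)] at h
  refine le_degreeGap_of_starThreshold_le hm (by linarith)
    ((starThreshold_le_of_mem_bigY hA hk hl hy hv).trans ?_)
  have hM := leafFactor_pos (show 2 ≤ k + l by omega)
  have hinner : leafFactor (k + l) * (r * (1 - rho A y) ^ (k + l - 1)) ≤ (1 - b) ^ (k + l) :=
    calc leafFactor (k + l) * (r * (1 - rho A y) ^ (k + l - 1))
        ≤ leafFactor (k + l) * (lam0 1 (k + l - 1) * (1 - b) ^ (k + l)) := by gcongr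
      _ = (1 - b) ^ (k + l) := by
        rw [← mul_assoc, leafFactor_mul_lam0_one (by omega), one_mul]
  linarith

theorem le_leafFactor_mul_alphaX (hA : ∀ u v, A u v → ¬ A v u) (hk : 1 ≤ k) (hl : 1 ≤ l)
    (hm : 6 ≤ k + l) {y : V} (hy : y ∈ bigY A)
    (hv : lam0 k l * starThreshold (k + l) ≤ ((k : ℝ) + l + 1) * sVert k l A y) :
    starThreshold (k + l) - (1 / 2) ^ (k + l) -
        leafFactor (k + l) * degreeGap (k + l) * (1 / 2) ^ (k + l - 1) ≤
      leafFactor (k + l) * alphaX A := by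
  have hM := leafFactor_pos (show 2 ≤ k + l by omega)
  have hleaf : rhoIn A (bigX A) y * (1 - rho A y) ^ (k + l - 1) +
        rhoIn A (bigY A) y * (1 / 2) ^ (k + l - 1) ≤
      alphaX A * 1 + degreeGap (k + l) * (1 / 2) ^ (k + l - 1) := by
    have hρ := rho_le_one (A := A) y
    have hρ' : 0 ≤ rho A y := muSet_nonneg _
    gcongr
    · exact muSet_nonneg _
    · exact rhoIn_le_muSet _ y
    · exact pow_le_one₀ (by linarith) (by linarith)
    · exact rhoIn_bigY_le_degreeGap hA hk hl hm hy hv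
  linarith [starThreshold_le_of_mem_bigY hA hk hl hy hv,
    mul_le_mul_of_nonneg_left hleaf hM.le]

theorem lam0_mul_le_rhoPIn_pow_mul_rhoMIn_pow (hA : ∀ u v, A u v → ¬ A v u) (hk : 1 ≤ k)
    (hl : 1 ≤ l) (hX : ∀ x ∈ bigX A, 1 - rho A x ≤ t) (ht : 0 ≤ t) {x : V} (hx : x ∈ bigX A)
    (hv : lam0 k l * starThreshold (k + l) ≤ ((k : ℝ) + l + 1) * sVert k l A x) :
    lam0 k l * (starThreshold (k + l) - 2 * leafFactor (k + l) * t ^ (k + l - 1)) ≤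
      rhoPIn A (bigY A) x ^ k * rhoMIn A (bigY A) x ^ l := by
  have hK := mul_pos (leafFactor_pos (show 2 ≤ k + l by omega)) (lam0_pos k l)
  have hcenter := sCond_zero_le_of_forall_one_sub_rho_le hA hk hl hX ht x
  rw [← show bigY A = (bigX A)ᶜ from rfl] at hcenter
  have hleaf : rho A x * (1 - rho A x) ^ (k + l - 1) + muSet (bigX A) * t ^ (k + l - 1) ≤
      1 * t ^ (k + l - 1) + 1 * t ^ (k + l - 1) := by
    have := rho_le_one (A := A) x
    gcongr
    · exact hX x hx
    · exact muSet_le_one _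
  have hsum := hv.trans (mul_sVert_le_of_rho hA hk hl x)
  linarith [mul_le_mul_of_nonneg_left hleaf hK.le]

end Extremal

section Optimum

variable {k l : ℕ}

theorem starThreshold_eq (m : ℕ) : starThreshold m = (1 - 1 / ((m : ℝ) + 1)) ^ m := by
  rw [starThreshold]
  congr 1
  field_simp
  ring

theorem lam0_mul_starThreshold_div_le_OPT_self (k : ℕ) :
    lam0 k k * (1 / (((2 * k : ℕ) : ℝ) + 1) * starThreshold (2 * k)) ≤ OPT k k := by
  rw [OPT, if_pos rfl, lam0_self, starThreshold_eq]
  set a : ℝ := 1 / (((2 * k : ℕ) : ℝ) + 1)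
  have ha : a ∈ Set.Icc 0 1 :=
    ⟨by positivity, div_le_one_of_le₀ (by linarith [Nat.cast_nonneg (α := ℝ) (2 * k)])
      (by positivity)⟩
  have hbdd : BddAbove {y : ℝ | ∃ a ∈ Set.Icc (0 : ℝ) 1,
      y = a * (1 - a) ^ (2 * k) + (1 - a) * a ^ (2 * k)} := by
    refine ⟨1, ?_⟩
    rintro _ ⟨b, ⟨hb, hb'⟩, rfl⟩
    calc b * (1 - b) ^ (2 * k) + (1 - b) * b ^ (2 * k) ≤ b * 1 + (1 - b) * 1 := by
          have : 0 ≤ 1 - b := sub_nonneg.2 hb'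
          gcongr <;> exact pow_le_one₀ ‹_› (by linarith)
      _ = 1 := by ring
  gcongr
  refine le_trans ?_ (le_csSup hbdd ⟨a, ha, rfl⟩)
  have := mul_nonneg (sub_nonneg.2 ha.2) (pow_nonneg ha.1 (2 * k))
  linarith

theorem bddAbove_OPT_of_ne (k l : ℕ) {C : ℝ} (hC : 0 ≤ C) :
    BddAbove {y : ℝ | ∃ a ∈ Set.Icc (0 : ℝ) (1 / 2),
      ∃ d ∈ Set.Icc (0 : ℝ) ((k : ℝ) / ((k : ℝ) + (l : ℝ))),
      y = a * (1 - a) ^ (k + l) * d ^ k * (1 - d) ^ l + C * (1 - a) * a ^ (k + l) * (1 - d)} := by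
  refine ⟨1 * 1 * 1 * 1 + C * 1 * 1 * 1, ?_⟩
  rintro _ ⟨a, ⟨ha, ha'⟩, d, ⟨hd, hd'⟩, rfl⟩
  have hd₁ : d ≤ 1 := hd'.trans (div_le_one_of_le₀ (by simp) (by positivity))
  have ha₀ : 0 ≤ 1 - a := by linarith
  have hd₀ : 0 ≤ 1 - d := sub_nonneg.2 hd₁
  gcongr <;> first | linarith | exact pow_le_one₀ ‹_› (by linarith)

theorem lam0_mul_starThreshold_div_le_OPT_of_ne (hk : 1 ≤ k) (hkl : k ≠ l) :
    lam0 k l * (1 / (((k + l : ℕ) : ℝ) + 1) * starThreshold (k + l)) ≤ OPT k l := by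
  have hk' : (1 : ℝ) ≤ k := mod_cast hk
  rw [OPT, if_neg hkl, lam0_eq_div_pow_mul_div_pow, starThreshold_eq]
  set a : ℝ := 1 / (((k + l : ℕ) : ℝ) + 1)
  set d : ℝ := (k : ℝ) / (k + l)
  set C : ℝ := ((k : ℝ) - 1) ^ (k - 1) * (l : ℝ) ^ l / ((k : ℝ) + l - 1) ^ (k + l - 1)
  have ha : a ∈ Set.Icc 0 (1 / 2) := by
    refine ⟨by positivity, one_div_le_one_div_of_le two_pos ?_⟩
    push_cast
    linarith [Nat.cast_nonneg (α := ℝ) l]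
  have hd : d ∈ Set.Icc 0 d := ⟨by positivity, le_rfl⟩
  have hd' : (l : ℝ) / (k + l) = 1 - d := by simp only [d]; field_simp; ring
  have hC : 0 ≤ C := by
    have : 0 ≤ (k : ℝ) - 1 := by linarith
    have : 0 ≤ (k : ℝ) + l - 1 := by linarith [Nat.cast_nonneg (α := ℝ) l]
    positivity
  refine le_trans ?_ (le_csSup (bddAbove_OPT_of_ne k l hC) ⟨a, ha, d, hd, rfl⟩)
  have hrest : 0 ≤ C * (1 - a) * a ^ (k + l) * (1 - d) := by
    have : 0 ≤ 1 - a := by linarith [ha.2]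
    have := ha.1
    rw [← hd']
    positivity
  rw [hd']
  linarith

theorem lam0_mul_starThreshold_le_mul_OPT (hk : 1 ≤ k) :
    lam0 k l * starThreshold (k + l) ≤ ((k : ℝ) + l + 1) * OPT k l := by
  rw [← div_le_iff₀' (by positivity)]
  have h : lam0 k l * (1 / (((k + l : ℕ) : ℝ) + 1) * starThreshold (k + l)) ≤ OPT k l := by
    obtain rfl | hkl := eq_or_ne k l
    · simpa only [two_mul] using lam0_mul_starThreshold_div_le_OPT_self k
    · exact lam0_mul_starThreshold_div_le_OPT_of_ne hk hkl
  refine le_trans (le_of_eq ?_) h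
  push_cast
  ring

end Optimum

section Conclusion

variable {k l : ℕ} {V : Type*} [Fintype V] {A : V → V → Prop}

theorem one_sub_Dmin_le (hX : (bigX A).Nonempty) {t : ℝ} (h : ∀ x ∈ bigX A, 1 - t ≤ rho A x) :
    1 - Dmin A ≤ t := by
  have : 1 - t ≤ Dmin A := le_csInf (hX.image _) (Set.forall_mem_image.2 h)
  linarith

theorem le_S1min (hX : (bigX A).Nonempty) {s : ℝ}
    (h : ∀ x ∈ bigX A, s ≤ rhoPIn A (bigY A) x ^ k * rhoMIn A (bigY A) x ^ l) :
    s ≤ S1min k l A :=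
  le_csInf (hX.image _) (Set.forall_mem_image.2 h)

theorem betaY_mem_Icc (hY : (bigY A).Nonempty) {t : ℝ}
    (h : ∀ y ∈ bigY A, rhoIn A (bigY A) y ≤ t) : betaY A ∈ Set.Icc 0 t := by
  obtain ⟨y, hy, hβ⟩ := exists_rhoIn_eq_betaY hY
  exact hβ ▸ ⟨rhoIn_nonneg _ y, h y hy⟩

theorem div_mul_choose_le_one (k l : ℕ) :
    ((k : ℝ) + l - 1) / (((k : ℝ) + l + 1) * (Nat.choose (k + l) k : ℝ)) ≤ 1 := by
  have hchoose : (1 : ℝ) ≤ (k + l).choose k :=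
    mod_cast Nat.choose_pos (Nat.le_add_right k l)
  refine div_le_one_of_le₀ ?_ (by positivity)
  calc (k : ℝ) + l - 1 ≤ (k + l + 1) * 1 := by linarith
    _ ≤ (k + l + 1) * (k + l).choose k := by gcongr

theorem S1min_sub_pow_le_S2min (hX : (bigX A).Nonempty) (hm : 1 ≤ k + l) (hβ : betaY A ≤ 1)
    (hβ₀ : 0 ≤ betaY A) : S1min k l A - (1 - Dmin A) ^ (k + l - 2) ≤ S2min k l A := by
  have hD : 0 ≤ 1 - Dmin A := sub_nonneg.2 (Dmin_le_one hX)
  have hα : 0 ≤ alphaX A := muSet_nonneg _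
  have hα' : 0 ≤ 1 - alphaX A := sub_nonneg.2 alphaX_le_one
  have : (0 : ℝ) ≤ k + l - 1 := sub_nonneg.2 (mod_cast hm)
  have hαβ : (alphaX A + betaY A) * (1 - alphaX A) ≤ 1 :=
    calc (alphaX A + betaY A) * (1 - alphaX A) ≤ (alphaX A + 1) * (1 - alphaX A) := by gcongr
      _ ≤ 1 := by linarith [sq_nonneg (alphaX A)]
  refine sub_le_sub_left ?_ _
  rw [mul_assoc _ (alphaX A + betaY A)]
  exact mul_le_of_le_one_left (by positivity)
    (mul_le_one₀ (div_mul_choose_le_one k l) (by positivity) hαβ)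

theorem lam1_mul_le (hk : 1 ≤ k) (hl : 1 ≤ l) (hX : (bigX A).Nonempty) {t : ℝ}
    (hβ : betaY A ∈ Set.Icc 0 t) :
    lam1 k l * ((1 - alphaX A) / alphaX A) * betaY A ^ (k + l - 1) ≤
      lam0 k l * (leafFactor (k + l) / alphaX A * t ^ (k + l - 1)) := by
  have hα := alphaX_pos hX
  have hα' : 0 ≤ 1 - alphaX A := sub_nonneg.2 alphaX_le_one
  have := leafFactor_pos (show 2 ≤ k + l by omega)
  have := lam0_pos k l
  have hβ₀ := hβ.1
  calc lam1 k l * ((1 - alphaX A) / alphaX A) * betaY A ^ (k + l - 1)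
      ≤ leafFactor (k + l) * lam0 k l * (1 / alphaX A) * t ^ (k + l - 1) := by
        gcongr
        · exact lam1_le_leafFactor_mul_lam0 hk hl
        · linarith
        · exact hβ.2
    _ = lam0 k l * (leafFactor (k + l) / alphaX A * t ^ (k + l - 1)) := by ring

theorem stmt15_general (hk : 1 ≤ k) (hl : 1 ≤ l) (hm : 6 ≤ k + l)
    (hA : ∀ u v, A u v → ¬ A v u)
    (hvert : ∀ v, lam0 k l * starThreshold (k + l) ≤ ((k : ℝ) + l + 1) * sVert k l A v)
    (hX : (bigX A).Nonempty) (hY : (bigY A).Nonempty) :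
    lam1 k l * ((1 - alphaX A) / alphaX A) * betaY A ^ (k + l - 1) ≤ S2min k l A := by
  set δ := degreeGap (k + l)
  set M := leafFactor (k + l)
  set q := starThreshold (k + l)
  have hδ : 0 ≤ δ := (degreeGap_pos (by omega)).le
  have hδ' : δ ≤ 1 / 2 := degreeGap_le_half (by omega)
  have hρ : ∀ x ∈ bigX A, 1 - δ ≤ rho A x := fun x hx =>
    one_sub_degreeGap_le_rho hA hk hl hm hx (hvert x)
  have hβ : betaY A ∈ Set.Icc 0 δ := betaY_mem_Icc hY fun y hy =>
    rhoIn_bigY_le_degreeGap hA hk hl hm hy (hvert y)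
  have hS₁ : lam0 k l * (q - 2 * M * δ ^ (k + l - 1)) ≤ S1min k l A := le_S1min hX fun x hx =>
    lam0_mul_le_rhoPIn_pow_mul_rhoMIn_pow hA hk hl (fun x hx => sub_le_comm.1 (hρ x hx)) hδ hx
      (hvert x)
  have herror : (1 - Dmin A) ^ (k + l - 2) ≤ lam0 k l * 2 ^ (k + l) * δ ^ (k + l - 2) :=
    (pow_le_pow_left₀ (sub_nonneg.2 (Dmin_le_one hX)) (one_sub_Dmin_le hX hρ) _).trans
      (le_mul_of_one_le_left (by positivity) (one_le_lam0_mul_two_pow k l))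
  obtain ⟨y, hy⟩ := hY
  calc lam1 k l * ((1 - alphaX A) / alphaX A) * betaY A ^ (k + l - 1)
      ≤ lam0 k l * (M / alphaX A * δ ^ (k + l - 1)) := lam1_mul_le hk hl hX hβ
    _ ≤ lam0 k l * (q - 2 * M * δ ^ (k + l - 1) - 2 ^ (k + l) * δ ^ (k + l - 2)) :=
        mul_le_mul_of_nonneg_left (leafFactor_div_mul_degreeGap_pow_le hm (alphaX_pos hX)
          (le_leafFactor_mul_alphaX hA hk hl hm hy (hvert y))) (lam0_pos k l).le
    _ ≤ S1min k l A - (1 - Dmin A) ^ (k + l - 2) := by linarith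
    _ ≤ S2min k l A := S1min_sub_pow_le_S2min hX (by omega) (by linarith [hβ.2]) hβ.1

end Conclusion

theorem stmt15 (k l : ℕ) (hl : 1 ≤ l) (hlk : l ≤ k) (hm : 6 ≤ k + l)
    (V : Type) [Fintype V] (A : V → V → Prop)
    (hirr : Irreflexive A) (hopp : ∀ u v, A u v → ¬ A v u) (hn : 1 ≤ Fintype.card V)
    (hvert : ∀ v : V, OPT k l ≤ sVert k l A v)
    (hX : (bigX A).Nonempty) (hY : (bigY A).Nonempty) :
    S2min k l A ≥ lam1 k l * ((1 - alphaX A) / alphaX A) * betaY A ^ (k + l - 1) := by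
  have hk : 1 ≤ k := hl.trans hlk
  exact stmt15_general hk hl hm hopp (fun v => (lam0_mul_starThreshold_le_mul_OPT hk).trans
    (mul_le_mul_of_nonneg_left (hvert v) (by positivity))) hX hY
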